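/- arXiv:1909.13835 — 3 statements merged into one kernel-verified Lean document; each statement's English description precedes it below -/
import Mathlib

section
/- Let K be a field, A and B K-algebras, (C, φ) a measuring from A to B, and n ≥ 1. Then the entrywise map φ_n : C → Hom_K(M_n(A), M_n(B)) defined by (φ_n(c)(M))_{ij} = φ(c)(M_{ij}) is a measuring from the matrix algebra M_n(A) to the matrix algebra M_n(B); that is, φ_n(c)(M N) = Σ (φ_n(c₁)(M)) (φ_n(c₂)(N)) and φ_n(c)(1) = ε(c) 1 for all c ∈ C and M, N ∈ M_n(A). -/
open TensorProduct PiTensorProduct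

/-- A coalgebra measuring of associative algebras: `φ c (a * a') = Σ (φ c₁ a) * (φ c₂ a')`
and `φ c 1 = ε c • 1`, where `comul c = Σ c₁ ⊗ c₂` in Sweedler notation. -/
def IsMeasuring (K : Type*) [Field K] {C A B : Type*}
    [AddCommGroup C] [Module K C] [Coalgebra K C]
    [Ring A] [Algebra K A] [Ring B] [Algebra K B]
    (φ : C →ₗ[K] A →ₗ[K] B) : Prop :=
  (∀ (c : C) (a a' : A),
      φ c (a * a') =
        TensorProduct.lift ((LinearMap.mul K B).compl₁₂ (φ.flip a) (φ.flip a'))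
          (Coalgebra.comul (R := K) c)) ∧
  ∀ c : C, φ c 1 = Coalgebra.counit (R := K) c • (1 : B)

/-- Cocommutativity of a coalgebra: the flip fixes the coproduct. -/
def IsCocomm (K : Type*) [Field K] (C : Type*)
    [AddCommGroup C] [Module K C] [Coalgebra K C] : Prop :=
  ∀ c : C, (TensorProduct.comm K C C) (Coalgebra.comul (R := K) c) = Coalgebra.comul (R := K) c

theorem lift_mul_compl₁₂_matrix_apply {R C D B ι : Type*} [CommSemiring R]
    [AddCommMonoid C] [Module R C] [AddCommMonoid D] [Module R D]
    [NonUnitalNonAssocSemiring B] [Module R B] [SMulCommClass R B B] [IsScalarTower R B B]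
    [Fintype ι] (f : C →ₗ[R] Matrix ι ι B) (g : D →ₗ[R] Matrix ι ι B)
    (t : C ⊗[R] D) (i j : ι) :
    TensorProduct.lift ((LinearMap.mul R (Matrix ι ι B)).compl₁₂ f g) t i j =
      ∑ k, TensorProduct.lift ((LinearMap.mul R B).compl₁₂
        (Matrix.entryLinearMap R B i k ∘ₗ f) (Matrix.entryLinearMap R B k j ∘ₗ g)) t := by
  induction t using TensorProduct.induction_on with
  | zero => simp
  | tmul x y => simp [Matrix.mul_apply]
  | add t u ht hu => simp only [map_add, Matrix.add_apply, ht, hu, Finset.sum_add_distrib]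

theorem measuring_matrix_general {K C A B ι : Type*} [Field K]
    [AddCommGroup C] [Module K C] [Coalgebra K C]
    [Ring A] [Algebra K A] [Ring B] [Algebra K B] [Fintype ι] [DecidableEq ι]
    {φ : C →ₗ[K] A →ₗ[K] B} (hφ : IsMeasuring K φ)
    {Φ : C →ₗ[K] Matrix ι ι A →ₗ[K] Matrix ι ι B}
    (hΦ : ∀ (c : C) (M : Matrix ι ι A) (i j : ι), Φ c M i j = φ c (M i j)) :
    IsMeasuring K Φ := by
  have entry_comp_flip (M : Matrix ι ι A) (i j : ι) :
      Matrix.entryLinearMap K B i j ∘ₗ Φ.flip M = φ.flip (M i j) :=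
    LinearMap.ext fun c => hΦ c M i j
  obtain ⟨φ_mul, φ_one⟩ := hφ
  refine ⟨fun c M N => ?_, fun c => ?_⟩ <;> ext i j
  · calc
      Φ c (M * N) i j = ∑ k, φ c (M i k * N k j) := by rw [hΦ, Matrix.mul_apply, map_sum]
      _ = ∑ k, TensorProduct.lift
            ((LinearMap.mul K B).compl₁₂ (φ.flip (M i k)) (φ.flip (N k j)))
            (Coalgebra.comul (R := K) c) := by simp only [φ_mul]
      _ = TensorProduct.lift
            ((LinearMap.mul K (Matrix ι ι B)).compl₁₂ (Φ.flip M) (Φ.flip N))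
            (Coalgebra.comul (R := K) c) i j := by
        simp only [lift_mul_compl₁₂_matrix_apply, entry_comp_flip]
  · obtain rfl | hij := eq_or_ne i j
    · simp only [hΦ, Matrix.smul_apply, Matrix.one_apply_eq, φ_one]
    · simp only [hΦ, Matrix.smul_apply, Matrix.one_apply_ne hij, map_zero, smul_zero]

/-- If `(C, φ)` is a measuring from `A` to `B`, then the entrywise map
`Φ`, `(Φ c M) i j = φ c (M i j)`, is a measuring from `Mₙ(A)` to `Mₙ(B)`. -/
theorem measuring_matrix
    (K : Type*) [Field K] (C A B : Type*)
    [AddCommGroup C] [Module K C] [Coalgebra K C]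
    [Ring A] [Algebra K A] [Ring B] [Algebra K B]
    (φ : C →ₗ[K] A →ₗ[K] B) (hφ : IsMeasuring K φ)
    (n : ℕ) (hn : 1 ≤ n)
    (Φ : C →ₗ[K] Matrix (Fin n) (Fin n) A →ₗ[K] Matrix (Fin n) (Fin n) B)
    (hΦ : ∀ (c : C) (M : Matrix (Fin n) (Fin n) A) (i j : Fin n), Φ c M i j = φ c (M i j)) :
    IsMeasuring K Φ :=
  measuring_matrix_general hφ hΦ
end

section
/- Let K be a field, g and g' Lie algebras over K, and φ : C → Hom_K(g, g') a cocommutative measuring of Lie algebras. Then there exists a measuring of associative algebras U(φ) : C → Hom_K(U(g), U(g')) between the universal enveloping algebras such that U(φ)(c)(ι(x)) = ι(φ(c)(x)) for all c ∈ C, x ∈ g, where ι : g → U(g) and ι : g' → U(g') are the canonical maps; that is, U(φ)(c)(u v) = Σ U(φ)(c₁)(u) · U(φ)(c₂)(v) and U(φ)(c)(1) = ε(c) · 1 for all c ∈ C and u, v ∈ U(g). -/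
open TensorProduct PiTensorProduct

/-- The Lie bracket of `L` as a bilinear map. -/
noncomputable def lieBracketHom (K : Type*) [Field K] (L : Type*) [LieRing L] [LieAlgebra K L] :
    L →ₗ[K] L →ₗ[K] L :=
  LinearMap.mk₂ K (fun x y => ⁅x, y⁆) (fun _ _ _ => add_lie _ _ _) (fun _ _ _ => smul_lie _ _ _)
    (fun _ _ _ => lie_add _ _ _) (fun _ _ _ => lie_smul _ _ _)

/-- A coalgebra measuring of Lie algebras: `φ c ⁅a, b⁆ = Σ ⁅φ c₁ a, φ c₂ b⁆`,
where `comul c = Σ c₁ ⊗ c₂` in Sweedler notation. -/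
def IsLieMeasuring (K : Type*) [Field K] {C L L' : Type*}
    [AddCommGroup C] [Module K C] [Coalgebra K C]
    [LieRing L] [LieAlgebra K L] [LieRing L'] [LieAlgebra K L']
    (φ : C →ₗ[K] L →ₗ[K] L') : Prop :=
  ∀ (c : C) (a b : L),
    φ c ⁅a, b⁆ =
      TensorProduct.lift ((lieBracketHom K L').compl₁₂ (φ.flip a) (φ.flip b))
        (Coalgebra.comul (R := K) c)

/-!
A measuring `C → Hom(A, B)` of associative algebras is, after swapping its two arguments, an algebra
homomorphism from `A` to the convolution algebra `Hom(C, B)`. If `C` is cocommutative, then the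
Lie measurings `C → Hom(L, B)` correspond in the same way to Lie homomorphisms from `L` to the
commutator Lie algebra of `Hom(C, B)`: cocommutativity rewrites `Σ b(c₂) a(c₁)` as
`Σ b(c₁) a(c₂)`, that is, as the convolution product in the opposite order. Hence `ι ∘ φ` extends
to `U(g)` by the universal property.
-/

noncomputable section

attribute [local instance] LieRing.ofAssociativeRing

open Coalgebra hiding IsCocomm
open WithConv

section Convolution

variable {R C A B : Type*} [CommSemiring R] [AddCommMonoid C] [Module R C]

lemma convMul_apply_eq_lift [CoalgebraStruct R C] [NonUnitalNonAssocSemiring B] [Module R B]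
    [SMulCommClass R B B] [IsScalarTower R B B] (f h : WithConv (C →ₗ[R] B)) (c : C) :
    (f * h) c = lift ((LinearMap.mul R B).compl₁₂ f.ofConv h.ofConv) (comul (R := R) c) :=
  LinearMap.congr_fun (lift_comp_map (LinearMap.mul R B) f.ofConv h.ofConv) (comul (R := R) c)

variable [Coalgebra R C] [Semiring A] [Algebra R A] [Semiring B] [Algebra R B]

/-- The map `C → Hom(A, B)` obtained by swapping the arguments of an algebra homomorphism from `A`
to the convolution algebra `Hom(C, B)`. -/
def measuringOfConvHom (F : A →ₐ[R] WithConv (C →ₗ[R] B)) : C →ₗ[R] A →ₗ[R] B :=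
  ((WithConv.linearEquiv R (C →ₗ[R] B)).toLinearMap ∘ₗ F.toLinearMap).flip

@[simp]
lemma measuringOfConvHom_apply (F : A →ₐ[R] WithConv (C →ₗ[R] B)) (c : C) (a : A) :
    measuringOfConvHom F c a = F a c :=
  rfl

end Convolution

variable {K C : Type*} [Field K] [AddCommGroup C] [Module K C] [Coalgebra K C]

lemma isMeasuring_measuringOfConvHom {A B : Type*} [Ring A] [Algebra K A] [Ring B] [Algebra K B]
    (F : A →ₐ[K] WithConv (C →ₗ[K] B)) : IsMeasuring K (measuringOfConvHom F) := by
  refine ⟨fun c a a' => ?_, fun c => ?_⟩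
  · rw [measuringOfConvHom_apply, map_mul, convMul_apply_eq_lift]
    rfl
  · rw [measuringOfConvHom_apply, map_one, LinearMap.convOne_apply, Algebra.algebraMap_eq_smul_one]

lemma lieBracketHom_eq_mul_sub_flip {B : Type*} [Ring B] [Algebra K B] :
    lieBracketHom K B = LinearMap.mul K B - (LinearMap.mul K B).flip := by
  ext a b
  simp [lieBracketHom, LieRing.of_associative_ring_bracket]

lemma IsCocomm.lift_flip_comul {V : Type*} [AddCommMonoid V] [Module K V] (hcc : IsCocomm K C)
    (β : C →ₗ[K] C →ₗ[K] V) (c : C) :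
    lift β.flip (comul (R := K) c) = lift β (comul (R := K) c) := by
  rw [← lift_comp_comm_eq]
  exact congrArg (lift β) (hcc c)

lemma IsCocomm.lift_lieBracketHom_comul {B : Type*} [Ring B] [Algebra K B] (hcc : IsCocomm K C)
    (f h : WithConv (C →ₗ[K] B)) (c : C) :
    lift ((lieBracketHom K B).compl₁₂ f.ofConv h.ofConv) (comul (R := K) c) = ⁅f, h⁆ c := by
  let β := (LinearMap.mul K B).compl₁₂ f.ofConv h.ofConv
  let γ := (LinearMap.mul K B).compl₁₂ h.ofConv f.ofConv
  have bracket_eq : (lieBracketHom K B).compl₁₂ f.ofConv h.ofConv = β - γ.flip := by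
    rw [lieBracketHom_eq_mul_sub_flip]
    rfl
  have lift_sub : lift (β - γ.flip) = lift β - lift γ.flip :=
    map_sub (lift.equiv (.id K) C C B) β γ.flip
  rw [bracket_eq, lift_sub, LinearMap.sub_apply, hcc.lift_flip_comul,
    ← convMul_apply_eq_lift, ← convMul_apply_eq_lift]
  rfl

namespace IsLieMeasuring

variable {L L' L'' B : Type*} [LieRing L] [LieAlgebra K L] [LieRing L'] [LieAlgebra K L']
  [LieRing L''] [LieAlgebra K L''] [Ring B] [Algebra K B]

lemma compr₂ {φ : C →ₗ[K] L →ₗ[K] L'} (hφ : IsLieMeasuring K φ) (f : L' →ₗ⁅K⁆ L'') :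
    IsLieMeasuring K (φ.compr₂ f.toLinearMap) := by
  intro c a b
  have bracket_comp : (lieBracketHom K L'').compl₁₂ ((φ.compr₂ f.toLinearMap).flip a)
      ((φ.compr₂ f.toLinearMap).flip b) =
        ((lieBracketHom K L').compl₁₂ (φ.flip a) (φ.flip b)).compr₂ f.toLinearMap := by
    ext
    simp [lieBracketHom]
  rw [bracket_comp, lift_compr₂]
  exact congrArg f (hφ c a b)

/-- The Lie algebra homomorphism from `L` to the convolution algebra `Hom(C, B)`, with the
commutator bracket, obtained by swapping the arguments of a cocommutative Lie measuring
`C → Hom(L, B)`. -/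
def toConvLieHom {φ : C →ₗ[K] L →ₗ[K] B} (hφ : IsLieMeasuring K φ) (hcc : IsCocomm K C) :
    L →ₗ⁅K⁆ WithConv (C →ₗ[K] B) where
  toLinearMap := (WithConv.linearEquiv K (C →ₗ[K] B)).symm.toLinearMap ∘ₗ φ.flip
  map_lie' {x y} := by
    ext c
    exact (hφ c x y).trans
      (hcc.lift_lieBracketHom_comul (toConv (φ.flip x)) (toConv (φ.flip y)) c)

@[simp]
lemma toConvLieHom_apply {φ : C →ₗ[K] L →ₗ[K] B} (hφ : IsLieMeasuring K φ) (hcc : IsCocomm K C)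
    (x : L) (c : C) : hφ.toConvLieHom hcc x c = φ c x :=
  rfl

/-- The extension of `ι ∘ φ` to an algebra homomorphism from `U(L)` to the convolution algebra
`Hom(C, U(L'))`, for a cocommutative Lie measuring `φ : C → Hom(L, L')`. -/
def universalEnvelopingConvHom {φ : C →ₗ[K] L →ₗ[K] L'} (hφ : IsLieMeasuring K φ)
    (hcc : IsCocomm K C) :
    UniversalEnvelopingAlgebra K L →ₐ[K] WithConv (C →ₗ[K] UniversalEnvelopingAlgebra K L') :=
  UniversalEnvelopingAlgebra.lift K
    ((hφ.compr₂ (UniversalEnvelopingAlgebra.ι K)).toConvLieHom hcc)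

lemma universalEnvelopingConvHom_ι_apply {φ : C →ₗ[K] L →ₗ[K] L'} (hφ : IsLieMeasuring K φ)
    (hcc : IsCocomm K C) (x : L) (c : C) :
    hφ.universalEnvelopingConvHom hcc (UniversalEnvelopingAlgebra.ι K x) c =
      UniversalEnvelopingAlgebra.ι K (φ c x) := by
  rw [universalEnvelopingConvHom, UniversalEnvelopingAlgebra.lift_ι_apply, toConvLieHom_apply]
  rfl

end IsLieMeasuring

end

/-- A cocommutative measuring of Lie algebras `φ : C → Hom_K(g, g')` induces
a measuring of associative algebras `U(φ) : C → Hom_K(U(g), U(g'))` between the universal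
enveloping algebras, compatible with the canonical maps `ι`. -/
theorem lieMeasuring_universalEnveloping
    (K : Type*) [Field K] (C g g' : Type*)
    [AddCommGroup C] [Module K C] [Coalgebra K C]
    [LieRing g] [LieAlgebra K g] [LieRing g'] [LieAlgebra K g']
    (φ : C →ₗ[K] g →ₗ[K] g') (hφ : IsLieMeasuring K φ) (hcc : IsCocomm K C) :
    ∃ U : C →ₗ[K] UniversalEnvelopingAlgebra K g →ₗ[K] UniversalEnvelopingAlgebra K g',
      IsMeasuring K U ∧
      ∀ (c : C) (x : g),
        U c (UniversalEnvelopingAlgebra.ι K x) = UniversalEnvelopingAlgebra.ι K (φ c x) := by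
  let F := hφ.universalEnvelopingConvHom hcc
  refine ⟨measuringOfConvHom F, isMeasuring_measuringOfConvHom F, fun c x => ?_⟩
  rw [measuringOfConvHom_apply]
  exact hφ.universalEnvelopingConvHom_ι_apply hcc x c
end

section
/- Let K be a field, A and B K-algebras, and (C, φ) a measuring from A to B. If z ∈ A satisfies φ(c)(z) = 0 for all c ∈ C, then φ(c)(z' z z'') = 0 for all c ∈ C and all z', z'' ∈ A; consequently φ(c) vanishes on the two-sided ideal of A generated by z. -/
/-!
The multiplicativity axiom of a measuring says exactly that the transpose `a ↦ (c ↦ φ c a)` is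
multiplicative from `A` to the convolution algebra `Hom_K(C, B)`. The elements killed by every
`φ c` are the kernel of this homomorphism, hence form a two-sided ideal.
-/

open TensorProduct PiTensorProduct

section ConvolutionMultiplicative

variable {K C A B : Type*} [CommSemiring K]
  [AddCommMonoid C] [Module K C] [CoalgebraStruct K C]
  [NonUnitalNonAssocRing A] [Module K A]
  [NonUnitalNonAssocSemiring B] [Module K B] [SMulCommClass K B B] [IsScalarTower K B B]
  {φ : C →ₗ[K] A →ₗ[K] B}

/-- The multiplicativity axiom of a measuring, `φ c (a * a') = Σ φ c₁ a * φ c₂ a'`, stated so that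
it makes sense for non-unital, non-associative algebras. It is written with `TensorProduct.lift` so
that it is literally the first component of `IsMeasuring`. -/
def IsConvMultiplicative (φ : C →ₗ[K] A →ₗ[K] B) : Prop :=
  ∀ (c : C) (a a' : A),
    φ c (a * a') =
      TensorProduct.lift ((LinearMap.mul K B).compl₁₂ (φ.flip a) (φ.flip a'))
        (CoalgebraStruct.comul (R := K) c)

namespace IsConvMultiplicative

theorem toConv_flip_mul (hφ : IsConvMultiplicative φ) (a a' : A) :
    WithConv.toConv (φ.flip (a * a')) =
      WithConv.toConv (φ.flip a) * WithConv.toConv (φ.flip a') := by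
  ext c
  have lift_eq_mul'_comp_map :
      TensorProduct.lift ((LinearMap.mul K B).compl₁₂ (φ.flip a) (φ.flip a')) =
        LinearMap.mul' K B ∘ₗ TensorProduct.map (φ.flip a) (φ.flip a') :=
    (TensorProduct.lift_comp_map _ _ _).symm
  exact (hφ c a a').trans (LinearMap.congr_fun lift_eq_mul'_comp_map _)

/-- The transpose `a ↦ (c ↦ φ c a)` as a non-unital homomorphism into the convolution algebra of
linear maps `C → B`; its kernel is the set of common zeros of the maps `φ c`. -/
def transposeHom (hφ : IsConvMultiplicative φ) : A →ₙ+* WithConv (C →ₗ[K] B) where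
  toFun a := WithConv.toConv (φ.flip a)
  map_mul' := hφ.toConv_flip_mul
  map_zero' := by rw [map_zero, WithConv.toConv_zero]
  map_add' a a' := by rw [map_add, WithConv.toConv_add]

theorem mem_ker_transposeHom (hφ : IsConvMultiplicative φ) {a : A} :
    a ∈ TwoSidedIdeal.ker hφ.transposeHom ↔ ∀ c : C, φ c a = 0 :=
  (TwoSidedIdeal.mem_ker _).trans (WithConv.toConv_eq_zero.trans LinearMap.ext_iff)

end IsConvMultiplicative

theorem measuring_vanishes_on_twoSidedIdeal_general (hφ : IsConvMultiplicative φ)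
    {s : Set A} (hs : ∀ z ∈ s, ∀ c : C, φ c z = 0) :
    (∀ z ∈ s, ∀ (c : C) (z' z'' : A), φ c (z' * z * z'') = 0) ∧
    (∀ c : C, ∀ x ∈ TwoSidedIdeal.span s, φ c x = 0) := by
  have span_le_ker : TwoSidedIdeal.span s ≤ TwoSidedIdeal.ker hφ.transposeHom :=
    TwoSidedIdeal.span_le.mpr fun z hz => hφ.mem_ker_transposeHom.mpr (hs z hz)
  have vanishes_on_span (c : C) (x : A) (hx : x ∈ TwoSidedIdeal.span s) : φ c x = 0 :=
    hφ.mem_ker_transposeHom.mp (span_le_ker hx) c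
  refine ⟨fun z hz c z' z'' => vanishes_on_span c _ ?_, vanishes_on_span⟩
  have mul_mem_span : z' * z ∈ TwoSidedIdeal.span s :=
    TwoSidedIdeal.mul_mem_left _ _ _ (TwoSidedIdeal.subset_span hz)
  exact TwoSidedIdeal.mul_mem_right _ _ _ mul_mem_span

end ConvolutionMultiplicative

/-- If `(C, φ)` is a measuring from `A` to `B` and `z ∈ A` satisfies
`φ c z = 0` for all `c`, then `φ c (z' * z * z'') = 0` for all `c, z', z''`; consequently each
`φ c` vanishes on the two-sided ideal of `A` generated by `z`. -/
theorem measuring_vanishes_on_twoSidedIdeal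
    (K : Type*) [Field K] (C A B : Type*)
    [AddCommGroup C] [Module K C] [Coalgebra K C]
    [Ring A] [Algebra K A] [Ring B] [Algebra K B]
    (φ : C →ₗ[K] A →ₗ[K] B) (hφ : IsMeasuring K φ)
    (z : A) (hz : ∀ c : C, φ c z = 0) :
    (∀ (c : C) (z' z'' : A), φ c (z' * z * z'') = 0) ∧
    (∀ c : C, ∀ x ∈ TwoSidedIdeal.span ({z} : Set A), φ c x = 0) := by
  have ⟨vanishes_on_products, vanishes_on_span⟩ :=
    measuring_vanishes_on_twoSidedIdeal_general hφ.1 (s := {z}) (by rintro _ rfl; exact hz)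
  exact ⟨vanishes_on_products z rfl, vanishes_on_span⟩
end
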